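/- Suppose that Σ_{i∈U} p_i ≥ αk for some α > 1. Then for every item i ∈ U, p_i ≤ (Σ_{j∈U} exp(u_j) / exp(u_i)) · (Pr_{PL+C}(R_{i=1}) + k(α e^{1-α})^k / (1 - (α e^{1-α})^k)), where R_{i=1} is the set of length-k rankings with item i in first position. -/

import Mathlib

open scoped Classical
open Finset

noncomputable section

/-- Weight of a consideration set `C`: each item in `C` is considered (prob `p i`),
each item outside is not considered (prob `1 - p j`). -/
def considerWeight (n : ℕ) (p : Fin n → ℝ) (C : Finset (Fin n)) : ℝ :=
  (∏ i ∈ C, p i) * ∏ j ∈ Cᶜ, (1 - p j)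

/-- Normalizing constant `z_{k,p}`: total weight of consideration sets of size at least `k`. -/
def zConst (n k : ℕ) (p : Fin n → ℝ) : ℝ :=
  ∑ C ∈ Finset.univ.filter (fun C : Finset (Fin n) => k ≤ C.card), considerWeight n p C

/-- Probability of consideration set `C` (conditioned on `|C| ≥ k`). -/
def prC (n k : ℕ) (p : Fin n → ℝ) (C : Finset (Fin n)) : ℝ :=
  if k ≤ C.card then considerWeight n p C / zConst n k p else 0

/-- Plackett–Luce probability of the length-`k` ranking `r` given consideration set `C`. -/
def prPL (n k : ℕ) (u : Fin n → ℝ) (r : Fin k ↪ Fin n) (C : Finset (Fin n)) : ℝ :=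
  if ∀ t : Fin k, r t ∈ C then
    ∏ t : Fin k, Real.exp (u (r t)) /
      ∑ j ∈ C \ (Finset.Iio t).image r, Real.exp (u j)
  else 0

/-- Plackett–Luce-with-consideration (PL+C) probability of the ranking `r`. -/
def prPLC (n k : ℕ) (u p : Fin n → ℝ) (r : Fin k ↪ Fin n) : ℝ :=
  ∑ C : Finset (Fin n), prC n k p C * prPL n k u r C

/-- PL probability of a set of rankings. -/
def prPLset (n k : ℕ) (u : Fin n → ℝ) (R : Finset (Fin k ↪ Fin n)) (C : Finset (Fin n)) : ℝ :=
  ∑ r ∈ R, prPL n k u r C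

/-- PL+C probability of a set of rankings. -/
def prPLCset (n k : ℕ) (u p : Fin n → ℝ) (R : Finset (Fin k ↪ Fin n)) : ℝ :=
  ∑ r ∈ R, prPLC n k u p r

/-- `R_{i≤ℓ}`: the set of length-`k` rankings with item `i` among the top `ℓ` positions. -/
def topSet (n k : ℕ) (i : Fin n) (ℓ : ℕ) : Finset (Fin k ↪ Fin n) :=
  Finset.univ.filter (fun r => ∃ t : Fin k, (t : ℕ) < ℓ ∧ r t = i)

lemma prPL_succ_aux (n k : ℕ) (u : Fin n → ℝ) (r : Fin (k+1) ↪ Fin n) (C : Finset (Fin n)) :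
    prPL n (k+1) u r C = if r 0 ∈ C then
      (Real.exp (u (r 0)) / ∑ j ∈ C, Real.exp (u j)) *
        prPL n k u ((Fin.succEmb k).trans r) (C.erase (r 0)) else 0 := by
  have hne : ∀ t : Fin k, r t.succ ≠ r 0 := fun t h => Fin.succ_ne_zero t (r.injective h)
  unfold prPL
  by_cases h0 : r 0 ∈ C
  · rw [if_pos h0]
    have hiff : (∀ t : Fin (k+1), r t ∈ C) ↔
        ∀ t : Fin k, ((Fin.succEmb k).trans r) t ∈ C.erase (r 0) := by
      rw [Fin.forall_fin_succ]
      simp [h0, hne]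
    by_cases h : ∀ t : Fin (k+1), r t ∈ C
    · rw [if_pos h, if_pos (hiff.1 h), Fin.prod_univ_succ]
      congr 1
      · congr 1
        apply Finset.sum_congr _ (fun _ _ => rfl)
        ext x
        simp
      · apply Finset.prod_congr rfl
        intro t _
        congr 1
        apply Finset.sum_congr _ (fun _ _ => rfl)
        ext x
        simp only [Finset.mem_sdiff, Finset.mem_image, Finset.mem_Iio, Finset.mem_erase,
          Fin.exists_fin_succ, Function.Embedding.trans_apply, Fin.coe_succEmb,
          Fin.succ_lt_succ_iff, Fin.succ_pos, true_and, ne_eq, eq_comm (a := r 0)]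
        rw [not_or]
        exact ⟨fun ⟨a, b, c⟩ => ⟨⟨b, a⟩, c⟩, fun ⟨⟨b, a⟩, c⟩ => ⟨a, b, c⟩⟩
    · rw [if_neg h, if_neg (fun h' => h (hiff.2 h')), mul_zero]
  · rw [if_neg h0, if_neg (fun h => h0 (h 0))]

lemma sum_first_aux (n k : ℕ) (u : Fin n → ℝ) (C : Finset (Fin n)) (i : Fin n) (hi : i ∈ C) :
    ∑ r ∈ (Finset.univ : Finset (Fin (k+1) ↪ Fin n)).filter (fun r => r 0 = i),
      prPL n (k+1) u r C =
    (Real.exp (u i) / ∑ j ∈ C, Real.exp (u j)) *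
      ∑ r : Fin k ↪ Fin n, prPL n k u r (C.erase i) := by
  have h1 : ∑ r : Fin k ↪ Fin n, prPL n k u r (C.erase i) =
      ∑ r ∈ (Finset.univ : Finset (Fin k ↪ Fin n)).filter (fun r : Fin k ↪ Fin n => i ∉ Set.range r),
        prPL n k u r (C.erase i) := by
    symm
    apply Finset.sum_subset (Finset.filter_subset _ _)
    intro r _ hr
    simp only [Finset.mem_filter, Finset.mem_univ, true_and, not_not] at hr
    obtain ⟨t, ht⟩ := hr
    unfold prPL
    rw [if_neg]
    intro h
    have := h t
    simp [ht] at this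
  rw [h1, Finset.mul_sum]
  refine Finset.sum_bij (fun r _ => (Fin.succEmb k).trans r) ?_ ?_ ?_ ?_
  · intro r hr
    simp only [Finset.mem_filter, Finset.mem_univ, true_and] at hr ⊢
    rintro ⟨t, ht⟩
    exact Fin.succ_ne_zero t (r.injective (ht.trans hr.symm))
  · intro r hr s hs h
    simp only [Finset.mem_filter, Finset.mem_univ, true_and] at hr hs
    ext t
    refine Fin.cases ?_ (fun t => ?_) t
    · rw [hr, hs]
    · have := DFunLike.congr_fun h t
      simpa using congrArg Fin.val this
  · intro r hr
    simp only [Finset.mem_filter, Finset.mem_univ, true_and] at hr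
    refine ⟨⟨Fin.cons i r, Fin.cons_injective_iff.2 ⟨hr, r.injective⟩⟩, ?_, ?_⟩
    · simp
    · ext t
      simp
  · intro r hr
    simp only [Finset.mem_filter, Finset.mem_univ, true_and] at hr
    rw [prPL_succ_aux, hr, if_pos hi]

lemma sum_all_aux (n k : ℕ) (u : Fin n → ℝ) : ∀ (C : Finset (Fin n)), k ≤ C.card →
    ∑ r : Fin k ↪ Fin n, prPL n k u r C = 1 := by
  induction k with
  | zero => intro C _; simp [prPL]
  | succ k ih =>
    intro C hC
    have hpos : 0 < ∑ j ∈ C, Real.exp (u j) :=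
      Finset.sum_pos (fun _ _ => Real.exp_pos _) (Finset.card_pos.1 (by omega))
    rw [← Finset.sum_fiberwise (s := Finset.univ) (g := fun r : Fin (k+1) ↪ Fin n => r 0)]
    rw [← Finset.sum_subset (Finset.subset_univ C)]
    · rw [Finset.sum_congr rfl (g := fun a => Real.exp (u a) / ∑ j ∈ C, Real.exp (u j))]
      · rw [← Finset.sum_div, div_self hpos.ne']
      · intro a ha
        rw [sum_first_aux n k u C a ha, ih, mul_one]
        rw [Finset.card_erase_of_mem ha]; omega
    · intro a _ ha
      apply Finset.sum_eq_zero
      intro r hr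
      simp only [Finset.mem_filter, Finset.mem_univ, true_and] at hr
      rw [prPL_succ_aux, hr, if_neg ha]

lemma topSet_aux (n k : ℕ) (u : Fin n → ℝ) (C : Finset (Fin n)) (i : Fin n) (hi : i ∈ C)
    (hk : 1 ≤ k) (hC : k ≤ C.card) :
    ∑ r ∈ topSet n k i 1, prPL n k u r C = Real.exp (u i) / ∑ j ∈ C, Real.exp (u j) := by
  obtain ⟨k, rfl⟩ : ∃ m, k = m + 1 := ⟨k - 1, by omega⟩
  have : topSet n (k+1) i 1 = Finset.univ.filter (fun r => r 0 = i) := by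
    ext r
    simp [topSet, Fin.exists_fin_succ]
  rw [this, sum_first_aux n k u C i hi, sum_all_aux, mul_one]
  rw [Finset.card_erase_of_mem hi]; omega

lemma cw_nonneg (n : ℕ) (p : Fin n → ℝ) (hp : ∀ a, 0 < p a ∧ p a ≤ 1) (C : Finset (Fin n)) :
    0 ≤ considerWeight n p C :=
  mul_nonneg (Finset.prod_nonneg fun a _ => (hp a).1.le)
    (Finset.prod_nonneg fun a _ => sub_nonneg.2 (hp a).2)

lemma harris_aux (n k : ℕ) (p : Fin n → ℝ) (hp : ∀ a, 0 < p a ∧ p a ≤ 1) (i : Fin n) :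
    p i * zConst n k p ≤ ∑ C ∈ Finset.univ.filter (fun C : Finset (Fin n) => k ≤ C.card),
      if i ∈ C then considerWeight n p C else 0 := by
  unfold zConst
  have hu : (Finset.univ : Finset (Finset (Fin n))) = (insert i (Finset.univ.erase i)).powerset := by
    simp
  have hni : i ∉ (Finset.univ : Finset (Fin n)).erase i := by simp
  rw [Finset.sum_filter, Finset.sum_filter, hu, Finset.sum_powerset_insert hni,
    Finset.sum_powerset_insert hni, ← Finset.sum_add_distrib, ← Finset.sum_add_distrib,
    Finset.mul_sum]
  apply Finset.sum_le_sum
  intro D hD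
  have hiD : i ∉ D := fun h => by simpa using Finset.mem_powerset.1 hD h
  have hc : Dᶜ = insert i (insert i D)ᶜ := by
    ext x; by_cases hx : x = i <;> simp [hx, hiD]
  have hnc : i ∉ (insert i D)ᶜ := by simp
  have e1 : considerWeight n p D = (1 - p i) * ((∏ a ∈ D, p a) * ∏ j ∈ (insert i D)ᶜ, (1 - p j)) := by
    unfold considerWeight
    rw [hc, Finset.prod_insert hnc]
    ring
  have e2 : considerWeight n p (insert i D) =
      p i * ((∏ a ∈ D, p a) * ∏ j ∈ (insert i D)ᶜ, (1 - p j)) := by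
    unfold considerWeight
    rw [Finset.prod_insert hiD]
    ring
  have hw : 0 ≤ (∏ a ∈ D, p a) * ∏ j ∈ (insert i D)ᶜ, (1 - p j) :=
    mul_nonneg (Finset.prod_nonneg fun a _ => (hp a).1.le)
      (Finset.prod_nonneg fun a _ => sub_nonneg.2 (hp a).2)
  rw [e1, e2]
  generalize (∏ a ∈ D, p a) * ∏ j ∈ (insert i D)ᶜ, (1 - p j) = w at hw
  rw [Finset.card_insert_of_notMem hiD]
  obtain ⟨h0, h1⟩ := hp i
  have := mul_nonneg h0.le hw
  have h2 := mul_nonneg this (sub_nonneg.2 h1)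
  simp only [hiD, Finset.mem_insert_self, if_true, if_false]
  split_ifs <;> first | omega | nlinarith

lemma z_pos_aux (n k : ℕ) (p : Fin n → ℝ) (hp : ∀ a, 0 < p a ∧ p a ≤ 1) (hkn : k ≤ n) :
    0 < zConst n k p := by
  unfold zConst
  apply Finset.sum_pos' (fun C _ => cw_nonneg n p hp C)
  refine ⟨Finset.univ, by simpa using hkn, ?_⟩
  simp only [considerWeight, Finset.compl_univ, Finset.prod_empty, mul_one]
  exact Finset.prod_pos fun a _ => (hp a).1

lemma prPL_nonneg_aux (n k : ℕ) (u : Fin n → ℝ) (r : Fin k ↪ Fin n) (C : Finset (Fin n)) :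
    0 ≤ prPL n k u r C := by
  unfold prPL
  split_ifs
  · exact Finset.prod_nonneg fun t _ =>
      div_nonneg (Real.exp_pos _).le (Finset.sum_nonneg fun _ _ => (Real.exp_pos _).le)
  · exact le_rfl

lemma main_aux (n k : ℕ) (u p : Fin n → ℝ) (i : Fin n)
    (hp : ∀ a, 0 < p a ∧ p a ≤ 1) (hk : 1 ≤ k) (hkn : k ≤ n) :
    Real.exp (u i) / (∑ j, Real.exp (u j)) * p i ≤ prPLCset n k u p (topSet n k i 1) := by
  have hz := z_pos_aux n k p hp hkn
  have hS : 0 ≤ Real.exp (u i) / (∑ j, Real.exp (u j)) :=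
    div_nonneg (Real.exp_pos _).le (Finset.sum_nonneg fun _ _ => (Real.exp_pos _).le)
  have h1 : p i ≤ (∑ C ∈ Finset.univ.filter (fun C : Finset (Fin n) => k ≤ C.card),
      if i ∈ C then considerWeight n p C else 0) / zConst n k p :=
    (le_div_iff₀ hz).2 (harris_aux n k p hp i)
  refine (mul_le_mul_of_nonneg_left h1 hS).trans ?_
  unfold prPLCset prPLC
  rw [Finset.sum_comm, Finset.sum_div, Finset.sum_filter, Finset.mul_sum]
  apply Finset.sum_le_sum
  intro C _
  rw [← Finset.mul_sum]
  unfold prC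
  by_cases hC : k ≤ C.card
  · rw [if_pos hC, if_pos hC]
    have hw := div_nonneg (cw_nonneg n p hp C) hz.le
    by_cases hi : i ∈ C
    · rw [if_pos hi, topSet_aux n k u C i hi hk hC, mul_comm]
      apply mul_le_mul_of_nonneg_left _ hw
      apply div_le_div_of_nonneg_left (Real.exp_pos _).le
      · exact Finset.sum_pos (fun _ _ => Real.exp_pos _) ⟨i, hi⟩
      · exact Finset.sum_le_sum_of_subset_of_nonneg (Finset.subset_univ C)
          fun _ _ _ => (Real.exp_pos _).le
    · rw [if_neg hi, zero_div, mul_zero]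
      exact mul_nonneg hw (Finset.sum_nonneg fun r _ => prPL_nonneg_aux n k u r C)
  · simp [hC]

/-- absolute upper bound on consideration probabilities. -/
theorem upper_bound_repeated_applications (n k : ℕ) (u p : Fin n → ℝ) (α : ℝ) (i : Fin n)
    (hp : ∀ a, 0 < p a ∧ p a ≤ 1) (hk : 1 ≤ k) (hkn : k ≤ n)
    (hα : 1 < α) (hsum : α * k ≤ ∑ a, p a) :
    p i ≤ (∑ j, Real.exp (u j)) / Real.exp (u i) *
      (prPLCset n k u p (topSet n k i 1) +
        k * (α * Real.exp (1 - α)) ^ k / (1 - (α * Real.exp (1 - α)) ^ k)) := by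
  have hm := main_aux n k u p i hp hk hkn
  have hS : 0 < ∑ j, Real.exp (u j) :=
    Finset.sum_pos (fun _ _ => Real.exp_pos _) ⟨i, Finset.mem_univ i⟩
  have he := Real.exp_pos (u i)
  have hq0 : 0 ≤ α * Real.exp (1 - α) := mul_nonneg (by linarith) (Real.exp_pos _).le
  have hq1 : α * Real.exp (1 - α) ≤ 1 := by
    have h := Real.add_one_le_exp (α - 1)
    have h2 : Real.exp (α - 1) * Real.exp (1 - α) = 1 := by
      rw [← Real.exp_add]; simp
    nlinarith [Real.exp_pos (1 - α)]
  have hx : 0 ≤ k * (α * Real.exp (1 - α)) ^ k / (1 - (α * Real.exp (1 - α)) ^ k) :=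
    div_nonneg (mul_nonneg (Nat.cast_nonneg k) (pow_nonneg hq0 k))
      (sub_nonneg.2 (pow_le_one₀ hq0 hq1))
  have hc : p i = (∑ j, Real.exp (u j)) / Real.exp (u i) *
      (Real.exp (u i) / (∑ j, Real.exp (u j)) * p i) := by
    field_simp
  calc p i = _ := hc
    _ ≤ _ := mul_le_mul_of_nonneg_left (by linarith) (div_pos hS he).le
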